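/- Fix a real α̂ > 0. Let λ_n be positive integers with λ_n·(log n)²/n → ∞ and λ_n·(log n)/n → 0 as n → ∞. For each n large enough, define q_n := (1/λ_n)·log(λ_n·(log λ_n)²/(n·α̂)) (which lies in (0,1) for n large), τ_n := log(1/q_n), Δ_n := (1 − (1−q_n)^{λ_n})/(λ_n·q_n), and T_n := n·q_n·Δ_n·log(1 + τ_n/(n·α̂·q_n·Δ_n)). Then T_n·α̂/log n → 1 as n → ∞; that is, T_n is asymptotically equivalent to (log n)/α̂. -/

import Mathlib

open Filter Real

/-!
Write `μ = log (λ (log λ)² / (n α̂))` for the mean number of active slots of a link during one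
interarrival period, so that `q = μ / λ`. The growth hypotheses squeeze `λ` between `n / (log n)²`
and `n / log n`; hence `log λ ~ log n`, `μ → ∞` and `μ = o(log n)`. On the one hand
`(1 - q) ^ λ ≤ exp (-μ) → 0`, so that `λ q Δ → 1` and the mean number `y = n q Δ` of transmitting
links is `~ n / λ`. On the other hand `τ = log λ - log μ ~ log n = o(n / λ)`. The
signal-to-interference ratio `(τ / α̂) / y` thus tends to zero, `log (1 + x) ~ x` applies, and
`T = y log (1 + (τ / α̂) / y) ~ τ / α̂ ~ (log n) / α̂`.
-/

section

open Asymptotics Topology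

variable {ι : Type*} {l : Filter ι}

theorem isEquivalent_log_one_add_nhds_zero : (fun x : ℝ => log (1 + x)) ~[𝓝 0] id := by
  have h := hasDerivAt_iff_isLittleO_nhds_zero.1 (hasDerivAt_log one_ne_zero)
  refine (h.congr_left fun x => ?_).isEquivalent
  simp only [log_one, sub_zero, inv_one, smul_eq_mul, mul_one, Pi.sub_apply]

theorem isEquivalent_mul_log_one_add_div {t y : ι → ℝ} (h : t =o[l] y) :
    (fun i => y i * log (1 + t i / y i)) ~[l] t :=
  calc (fun i => y i * log (1 + t i / y i))
      ~[l] fun i => y i * (t i / y i) :=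
        IsEquivalent.refl.mul
          (isEquivalent_log_one_add_nhds_zero.comp_tendsto h.tendsto_div_nhds_zero)
    _ =ᶠ[l] t := h.eventually_mul_div_cancel.mono fun _ hi => (mul_comm _ _).trans hi

theorem isLittleO_log_of_isBigO {f g : ι → ℝ} (hf : Tendsto f l atTop) (hfg : f =O[l] g) :
    (fun i => log (f i)) =o[l] g :=
  (isLittleO_log_id_atTop.comp_tendsto hf).trans_isBigO hfg

theorem tendsto_one_sub_pow_nhds_zero {p : ι → ℝ} {m : ι → ℕ} (hp : ∀ᶠ i in l, p i ≤ 1)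
    (hmp : Tendsto (fun i => m i * p i) l atTop) :
    Tendsto (fun i => (1 - p i) ^ m i) l (𝓝 0) := by
  refine squeeze_zero' ?_ ?_ (tendsto_exp_neg_atTop_nhds_zero.comp hmp)
  · filter_upwards [hp] with i hi using pow_nonneg (sub_nonneg.2 hi) _
  · filter_upwards [hp] with i hi
    calc (1 - p i) ^ m i ≤ exp (-p i) ^ m i :=
          pow_le_pow_left₀ (sub_nonneg.2 hi) (one_sub_le_exp_neg _) _
      _ = exp (-(m i * p i)) := by rw [← exp_nat_mul, mul_neg]

theorem eventually_pos_of_tendsto_mul_sq_div {a b c : ι → ℝ} (hc : ∀ᶠ i in l, 0 < c i)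
    (h : Tendsto (fun i => a i * b i ^ 2 / c i) l atTop) : ∀ᶠ i in l, 0 < a i := by
  filter_upwards [hc, h.eventually_gt_atTop 0] with i hci hi
  exact pos_of_mul_pos_left ((div_pos_iff_of_pos_right hci).1 hi) (sq_nonneg _)

theorem isLittleO_mul_sq_div_of_tendsto_mul_div {a b c : ι → ℝ}
    (h : Tendsto (fun i => a i * b i / c i) l (𝓝 0)) :
    (fun i => a i * b i ^ 2 / c i) =o[l] b :=
  (((isLittleO_one_iff ℝ).2 h).mul_isBigO (isBigO_refl b l)).congr
    (fun i => by ring) fun i => one_mul _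

theorem isLittleO_div_of_tendsto_mul_div {a b c : ι → ℝ} (ha : ∀ᶠ i in l, a i ≠ 0)
    (hc : ∀ᶠ i in l, c i ≠ 0) (h : Tendsto (fun i => a i * b i / c i) l (𝓝 0)) :
    b =o[l] fun i => c i / a i := by
  refine isLittleO_of_tendsto' ?_ (h.congr fun i => ?_)
  · filter_upwards [ha, hc] with i hai hci h0
    exact absurd h0 (div_ne_zero hci hai)
  · rw [div_div_eq_mul_div, mul_comm]

/-- The mean number `μ = log (λ (log λ)² / (n α̂))` of active slots of a link during one
interarrival period of `λ` slots, in a network of `n` links. Both `n` and `λ` are real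
variables here. -/
noncomputable def meanActiveSlots (ahat n lam : ℝ) : ℝ :=
  log (lam * log lam ^ 2 / (n * ahat))

/-- The activity probability `q = μ / λ` of the on-off power allocation scheme. -/
noncomputable def activityProb (ahat n lam : ℝ) : ℝ :=
  1 / lam * meanActiveSlots ahat n lam

/-- The full-buffer probability `Δ = (1 - (1 - q) ^ λ) / (λ q)` of a link that is active with
probability `q` and whose packets arrive every `λ` slots. -/
noncomputable def fullBufferProb (lam : ℕ) (q : ℝ) : ℝ :=
  (1 - (1 - q) ^ lam) / (lam * q)

/-- The effective throughput `T = n q Δ log (1 + τ / (n α̂ q Δ))` of `n` links with activity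
probability `q`, threshold `τ = log (1 / q)` and full-buffer probability `Δ`. -/
noncomputable def effectiveThroughput (ahat n q Δ : ℝ) : ℝ :=
  n * q * Δ * log (1 + log (1 / q) / (n * ahat * q * Δ))

theorem mul_activityProb (ahat n : ℝ) {lam : ℝ} (hlam : lam ≠ 0) :
    lam * activityProb ahat n lam = meanActiveSlots ahat n lam := by
  rw [activityProb, ← mul_assoc, mul_one_div_cancel hlam, one_mul]

theorem tendsto_mul_fullBufferProb {lam : ι → ℕ} {q : ι → ℝ} (hq : ∀ᶠ i in l, q i ≤ 1)
    (hlamq : Tendsto (fun i => lam i * q i) l atTop) :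
    Tendsto (fun i => lam i * q i * fullBufferProb (lam i) (q i)) l (𝓝 1) := by
  have h : Tendsto (fun i => 1 - (1 - q i) ^ lam i) l (𝓝 1) := by
    simpa only [sub_zero] using (tendsto_one_sub_pow_nhds_zero hq hlamq).const_sub 1
  refine h.congr' ?_
  filter_upwards [hlamq.eventually_ne_atTop 0] with i hi
  exact (mul_div_cancel₀ _ hi).symm

theorem isEquivalent_mul_fullBufferProb {n q : ι → ℝ} {lam : ι → ℕ}
    (hq : ∀ᶠ i in l, q i ≤ 1) (hlamq : Tendsto (fun i => lam i * q i) l atTop) :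
    (fun i => n i * q i * fullBufferProb (lam i) (q i)) ~[l] fun i => n i / lam i := by
  have h := (isEquivalent_const_iff_tendsto one_ne_zero).2 (tendsto_mul_fullBufferProb hq hlamq)
  have hmul := (IsEquivalent.refl (u := fun i => n i / lam i) (l := l)).mul h
  refine (hmul.congr_left ?_).congr_right (.of_forall fun i => mul_one _)
  filter_upwards [hlamq.eventually_ne_atTop 0] with i hi
  have hlam : (lam i : ℝ) ≠ 0 := left_ne_zero_of_mul hi
  simp only [Pi.mul_apply]
  field_simp

theorem isEquivalent_effectiveThroughput (ahat : ℝ) {n q Δ : ι → ℝ}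
    (h : (fun i => log (1 / q i)) =o[l] fun i => n i * q i * Δ i) :
    (fun i => effectiveThroughput ahat (n i) (q i) (Δ i)) ~[l] fun i => log (1 / q i) / ahat := by
  have h' : (fun i => log (1 / q i) / ahat) =o[l] fun i => n i * q i * Δ i := by
    simpa only [div_eq_inv_mul] using h.const_mul_left ahat⁻¹
  refine (isEquivalent_mul_log_one_add_div h').congr_left (.of_forall fun i => ?_)
  simp only [effectiveThroughput, div_div]
  ring_nf

section Growth

variable {ahat : ℝ} {n lam : ι → ℝ}

theorem isEquivalent_log_interarrival (hn : Tendsto n l atTop)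
    (hlo : Tendsto (fun i => lam i * log (n i) ^ 2 / n i) l atTop)
    (hhi : Tendsto (fun i => lam i * log (n i) / n i) l (𝓝 0)) :
    (fun i => log (lam i)) ~[l] fun i => log (n i) := by
  have hlogn : Tendsto (fun i => log (n i)) l atTop := tendsto_log_atTop.comp hn
  have hloglog : (fun i => 2 * log (log (n i))) =o[l] fun i => log (n i) :=
    (isLittleO_log_of_isBigO hlogn (isBigO_refl _ _)).const_mul_left 2
  have hlogA : (fun i => log (lam i * log (n i) ^ 2 / n i)) =o[l] fun i => log (n i) :=
    isLittleO_log_of_isBigO hlo (isLittleO_mul_sq_div_of_tendsto_mul_div hhi).isBigO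
  refine ((IsEquivalent.refl.add_isLittleO hlogA).sub_isLittleO hloglog).congr_left ?_
  filter_upwards [hn.eventually_gt_atTop 0, hlogn.eventually_gt_atTop 0,
    eventually_pos_of_tendsto_mul_sq_div (hn.eventually_gt_atTop 0) hlo] with i hni hlogi hlami
  simp only [Pi.add_apply, Pi.sub_apply]
  rw [log_div (by positivity) hni.ne', log_mul hlami.ne' (by positivity), log_pow]
  push_cast
  ring

theorem isEquivalent_mul_log_sq_div (ahat : ℝ)
    (hlog : (fun i => log (lam i)) ~[l] fun i => log (n i)) :
    (fun i => lam i * log (lam i) ^ 2 / (n i * ahat)) ~[l]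
      fun i => ahat⁻¹ * (lam i * log (n i) ^ 2 / n i) := by
  have h := (IsEquivalent.refl (u := fun i => lam i / (n i * ahat)) (l := l)).mul (hlog.pow 2)
  refine (h.congr_left (.of_forall fun i => ?_)).congr_right (.of_forall fun i => ?_) <;>
  · simp only [Pi.mul_apply, Pi.pow_apply]
    ring

theorem tendsto_mul_log_sq_div_atTop (hahat : 0 < ahat)
    (hlo : Tendsto (fun i => lam i * log (n i) ^ 2 / n i) l atTop)
    (hlog : (fun i => log (lam i)) ~[l] fun i => log (n i)) :
    Tendsto (fun i => lam i * log (lam i) ^ 2 / (n i * ahat)) l atTop :=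
  (isEquivalent_mul_log_sq_div ahat hlog).symm.tendsto_atTop
    (hlo.const_mul_atTop (inv_pos.2 hahat))

theorem tendsto_meanActiveSlots_atTop (hahat : 0 < ahat)
    (hlo : Tendsto (fun i => lam i * log (n i) ^ 2 / n i) l atTop)
    (hlog : (fun i => log (lam i)) ~[l] fun i => log (n i)) :
    Tendsto (fun i => meanActiveSlots ahat (n i) (lam i)) l atTop :=
  tendsto_log_atTop.comp (tendsto_mul_log_sq_div_atTop hahat hlo hlog)

theorem isLittleO_meanActiveSlots (hahat : 0 < ahat)
    (hlo : Tendsto (fun i => lam i * log (n i) ^ 2 / n i) l atTop)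
    (hhi : Tendsto (fun i => lam i * log (n i) / n i) l (𝓝 0))
    (hlog : (fun i => log (lam i)) ~[l] fun i => log (n i)) :
    (fun i => meanActiveSlots ahat (n i) (lam i)) =o[l] fun i => log (n i) :=
  isLittleO_log_of_isBigO (tendsto_mul_log_sq_div_atTop hahat hlo hlog) <|
    (isEquivalent_mul_log_sq_div ahat hlog).isBigO.trans
      ((isLittleO_mul_sq_div_of_tendsto_mul_div hhi).const_mul_left _).isBigO

theorem eventually_activityProb_le_one (hlam : ∀ᶠ i in l, 0 < lam i)
    (hμ : (fun i => meanActiveSlots ahat (n i) (lam i)) =o[l] fun i => log (lam i))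
    (hlog : Tendsto (fun i => log (lam i)) l atTop) :
    ∀ᶠ i in l, activityProb ahat (n i) (lam i) ≤ 1 := by
  filter_upwards [hlam, hμ.eventuallyLE, hlog.eventually_ge_atTop 0] with i hlami hμi hlogi
  refine le_of_mul_le_mul_left ?_ hlami
  calc lam i * activityProb ahat (n i) (lam i)
      = meanActiveSlots ahat (n i) (lam i) := mul_activityProb _ _ hlami.ne'
    _ ≤ log (lam i) := by simpa only [norm_of_nonneg hlogi] using (le_norm_self _).trans hμi
    _ ≤ lam i * 1 := by simpa only [mul_one] using log_le_self hlami.le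

theorem isEquivalent_log_one_div_activityProb (hlam : ∀ᶠ i in l, lam i ≠ 0)
    (hμ : Tendsto (fun i => meanActiveSlots ahat (n i) (lam i)) l atTop)
    (hμo : (fun i => meanActiveSlots ahat (n i) (lam i)) =o[l] fun i => log (lam i)) :
    (fun i => log (1 / activityProb ahat (n i) (lam i))) ~[l] fun i => log (lam i) := by
  have hlogμ := isLittleO_log_of_isBigO hμ hμo.isBigO
  refine (IsEquivalent.refl.sub_isLittleO hlogμ).congr_left ?_
  filter_upwards [hlam, hμ.eventually_ne_atTop 0] with i hlami hμi
  have hq : 1 / activityProb ahat (n i) (lam i) = lam i / meanActiveSlots ahat (n i) (lam i) := by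
    rw [activityProb, one_div_mul_eq_div, one_div_div]
  rw [hq, log_div hlami hμi, Pi.sub_apply]

end Growth

theorem effective_throughput_CAP_large_lambda_general {ahat : ℝ} (hahat : 0 < ahat) {n : ι → ℝ}
    {lam : ι → ℕ} (hn : Tendsto n l atTop)
    (hlo : Tendsto (fun i => (lam i : ℝ) * log (n i) ^ 2 / n i) l atTop)
    (hhi : Tendsto (fun i => (lam i : ℝ) * log (n i) / n i) l (𝓝 0)) :
    Tendsto (fun i =>
      let q := activityProb ahat (n i) (lam i)
      effectiveThroughput ahat (n i) q (fullBufferProb (lam i) q) * ahat / log (n i))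
      l (𝓝 1) := by
  have hlogn : Tendsto (fun i => log (n i)) l atTop := tendsto_log_atTop.comp hn
  have hpos := eventually_pos_of_tendsto_mul_sq_div (hn.eventually_gt_atTop 0) hlo
  have hne := hpos.mono fun _ => ne_of_gt
  have hlog : (fun i => log (lam i)) ~[l] fun i => log (n i) :=
    isEquivalent_log_interarrival hn hlo hhi
  have hμ := tendsto_meanActiveSlots_atTop hahat hlo hlog
  have hμo := (isLittleO_meanActiveSlots hahat hlo hhi hlog).trans_isEquivalent hlog.symm
  let q := fun i => activityProb ahat (n i) (lam i)
  let Δ := fun i => fullBufferProb (lam i) (q i)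
  have hq : ∀ᶠ i in l, q i ≤ 1 :=
    eventually_activityProb_le_one hpos hμo (hlog.symm.tendsto_atTop hlogn)
  have hτ : (fun i => log (1 / q i)) ~[l] fun i => log (n i) :=
    (isEquivalent_log_one_div_activityProb hne hμ hμo).trans hlog
  have hy : (fun i => n i * q i * Δ i) ~[l] fun i => n i / lam i :=
    isEquivalent_mul_fullBufferProb hq
      (hμ.congr' (hne.mono fun _ h => (mul_activityProb _ _ h).symm))
  have hlogo : (fun i => log (n i)) =o[l] fun i => n i / lam i :=
    isLittleO_div_of_tendsto_mul_div hne (hn.eventually_ne_atTop 0) hhi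
  have hτy := (hτ.trans_isLittleO hlogo).trans_isEquivalent hy.symm
  have hT : (fun i => effectiveThroughput ahat (n i) (q i) (Δ i)) ~[l] fun i => log (n i) / ahat :=
    (isEquivalent_effectiveThroughput ahat hτy).trans (hτ.div IsEquivalent.refl)
  have hTne := hlogn.eventually_ne_atTop 0 |>.mono fun _ h => div_ne_zero h hahat.ne'
  refine ((isEquivalent_iff_tendsto_one hTne).1 hT).congr fun i => ?_
  exact div_div_eq_mul_div _ _ _

end

/-- Theorem 3, part (iii) (constant arrival process, `λ = ω(n/(log n)²)` and
`λ = o(n/log n)`): with positive integer delay bounds `λ_n` satisfying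
`λ_n·(log n)²/n → ∞` and `λ_n·(log n)/n → 0`, activity probability
`q_n = (1/λ_n)·log(λ_n·(log λ_n)²/(n·ahat))`, threshold `τ_n = log(1/q_n)`, and
full-buffer probability `Δ_n = (1 − (1−q_n)^{λ_n})/(λ_n·q_n)`, the effective
throughput `T_n = n·q_n·Δ_n·log(1 + τ_n/(n·ahat·q_n·Δ_n))` satisfies
`T_n·ahat/log n → 1`. -/
theorem effective_throughput_CAP_large_lambda (ahat : ℝ) (hahat : 0 < ahat)
    (lam : ℕ → ℕ) (hlam1 : ∀ n, 0 < lam n)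
    (hlam_lo : Tendsto (fun n : ℕ => (lam n : ℝ) * (Real.log n) ^ 2 / n) atTop atTop)
    (hlam_hi : Tendsto (fun n : ℕ => (lam n : ℝ) * Real.log n / n) atTop (nhds 0)) :
    Tendsto (fun n : ℕ =>
      let q := (1 / (lam n : ℝ)) * Real.log ((lam n : ℝ) * (Real.log (lam n)) ^ 2 / (n * ahat))
      let τ := Real.log (1 / q)
      let Δ := (1 - (1 - q) ^ (lam n)) / ((lam n : ℝ) * q)
      (n * q * Δ * Real.log (1 + τ / (n * ahat * q * Δ))) * ahat / Real.log n)
      atTop (nhds 1) :=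
  effective_throughput_CAP_large_lambda_general hahat tendsto_natCast_atTop_atTop hlam_lo hlam_hi
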